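/- arXiv:1803.04753 — 2 statements merged into one kernel-verified Lean document; each statement's English description precedes it below -/
import Mathlib

section
/- Let K be an algebraically closed field of characteristic zero, A ⊆ K a subfield, N ≥ 1, and v̄ = (v₁,…,v_N) ∈ K^N. Let p̄ = (p₁,…,p_N) ∈ K^N satisfy Σᵢ pᵢ·vᵢ = 1 and trdeg_{A(v̄)}(p̄) = N − 1 (so p̄ is a generic point over A(v̄) of the hyperplane Π_{v̄}). Then for every finite tuple w̄ from K all of whose entries are algebraic over A(v̄), either every entry of v̄ is algebraic over A(w̄), or trdeg_{A(p̄)}(w̄) = trdeg_A(w̄). -/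
/-- The transcendence degree of a subfield `E` of `K` over a subfield `F`:
the supremum of the cardinalities of subsets of `E` that are algebraically
independent over `F`. -/
noncomputable def Subfield.trdeg {K : Type*} [Field K] (F E : Subfield K) : Cardinal :=
  ⨆ t : {t : Set K // t ⊆ (E : Set K) ∧ AlgebraicIndependent F ((↑) : t → K)}, Cardinal.mk t.1

/-- The subfield of `K` generated by a subfield `F` together with a set `s`. -/
def Subfield.extend {K : Type*} [Field K] (F : Subfield K) (s : Set K) : Subfield K :=
  Subfield.closure ((F : Set K) ∪ s)

/-- The transcendence degree over a subfield `F` of the subfield generated by `F`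
and the entries of a tuple `w`. -/
noncomputable def Subfield.trdegTuple {K : Type*} [Field K] (F : Subfield K)
    {m : ℕ} (w : Fin m → K) : Cardinal :=
  Subfield.trdeg F (F.extend (Set.range w))

/-!
Let `W` be the set of entries of `w`, let `F = A(W)`, and let `L` be the algebraic closure of `A(v)`
in `K`, so that `F ⊆ L`. If `p` is algebraically independent over `F`, then it is so over `A(B)` for
a transcendence basis `B ⊆ W` over `A`; by symmetry `B` stays independent over `A(p)`, so the
transcendence degree of `W` does not drop. Otherwise a nonzero polynomial `f` over `F` vanishes at
`p`. As `p` is generic over `L`, `f` vanishes on all `L`-points of the hyperplane. A line through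
the origin in direction `a ∈ F^ι` meets the hyperplane at the parameter `(a ⬝ᵥ v)⁻¹`, which is then
a root of `f (a X) ∈ F[X]`; if `f a ≠ 0` this polynomial is nonzero, so `a ⬝ᵥ v` is algebraic over
`F`. When `F` is infinite, some `a` has both `f a ≠ 0` and `f (a + eᵢ) ≠ 0`, so `v i`, the
difference of the two dot products, is algebraic over `F`. When `F` is finite, all of `W` is
algebraic over `A` and both transcendence degrees vanish.
-/

namespace GenericHyperplane

open AlgebraicIndependent Cardinal MvPolynomial Set
open scoped Matrix

section CommRing

variable {ι ι' R A : Type*} [CommRing R] [CommRing A] [Algebra R A]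

theorem algebraicIndependent_adjoin_range_symm {x : ι → A} {y : ι' → A}
    (hx : AlgebraicIndependent R x)
    (hy : AlgebraicIndependent (Algebra.adjoin R (range x)) y) :
    AlgebraicIndependent (Algebra.adjoin R (range y)) x := by
  have hxy : AlgebraicIndependent R (Sum.elim x y) := by
    simpa only [Sum.elim_swap] using
      (hx.sumElim hy).comp Sum.swap Sum.swap_leftInverse.injective
  exact (sumElim_iff.1 hxy).2

theorem exists_eval_ne_zero_and_eval_add_ne_zero [IsDomain R] [Infinite R] {f : MvPolynomial ι R}
    (hf : f ≠ 0) (b : ι → R) : ∃ a, eval a f ≠ 0 ∧ eval (a + b) f ≠ 0 := by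
  let g : MvPolynomial ι R := aeval (fun i => X i + C (b i)) f
  have eval_g (a : ι → R) : eval a g = eval (a + b) f := by
    rw [← aeval_eq_eval, ← aeval_eq_eval, comp_aeval_apply]
    simp only [map_add, aeval_X, aeval_C, Algebra.algebraMap_self_apply, Pi.add_def]
  have hg : g ≠ 0 := by
    intro hg
    refine hf (MvPolynomial.funext fun a => ?_)
    rw [map_zero, ← sub_add_cancel a b, ← eval_g, hg, map_zero]
  by_contra! h
  refine mul_ne_zero hf hg (MvPolynomial.funext fun a => ?_)
  rw [map_mul, eval_g, map_zero, mul_eq_zero, or_iff_not_imp_left]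
  exact h a

end CommRing

section FieldExtension

variable {ι F L K : Type*} [Field F] [Field L] [Field K] [Algebra F L] [Algebra F K]

theorem algebraicIndependent_of_card_le_cRk [Fintype ι] {x : ι → K}
    (h : (Fintype.card ι : Cardinal) ≤ (matroid F K).cRk (range x)) :
    AlgebraicIndependent F x := by
  have hcard : Nat.card ι ≤ Nat.card (range x) := by
    rw [← Nat.card_eq_fintype_card] at h
    exact_mod_cast (h.trans (Matroid.cRk_le_cardinalMk _ _)).trans_eq Nat.cast_card.symm
  have hinj : Function.Injective x := fun _ _ hxy =>
    (rangeFactorization_surjective.bijective_of_nat_card_le hcard).1 (Subtype.ext hxy)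
  have hrk : (range x).encard ≤ (matroid F K).eRk (range x) := by
    rw [← image_univ, hinj.encard_image, encard_univ, ENat.card_eq_coe_fintype_card,
      ← Matroid.toENat_cRk_eq]
    simpa only [image_univ, map_natCast] using OrderHomClass.mono toENat h
  exact .of_subtype_range hinj <| matroid_indep_iff.1 <|
    ((matroid F K).isRkFinite_of_finite (finite_range x)).indep_of_encard_le_eRk hrk

variable [Fintype ι]

theorem isAlgebraic_dotProduct_of_forall_aeval_eq_zero {v : ι → L} {f : MvPolynomial ι F}
    (hf : ∀ q : ι → L, q ⬝ᵥ v = 1 → aeval q f = 0) {a : ι → F} (ha : eval a f ≠ 0) :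
    IsAlgebraic F ((algebraMap F L ∘ a) ⬝ᵥ v) := by
  set c := (algebraMap F L ∘ a) ⬝ᵥ v
  rcases eq_or_ne c 0 with hc | hc
  · exact hc ▸ isAlgebraic_zero
  let g : Polynomial F := aeval (fun i => Polynomial.C (a i) * Polynomial.X) f
  have eval_g : g.eval 1 = eval a f := by
    rw [← Polynomial.coe_aeval_eq_eval, ← aeval_eq_eval, comp_aeval_apply]
    simp only [map_mul, Polynomial.aeval_C, Polynomial.aeval_X, mul_one,
      Algebra.algebraMap_self_apply]
  have aeval_g : Polynomial.aeval c⁻¹ g = aeval (c⁻¹ • (algebraMap F L ∘ a)) f := by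
    rw [comp_aeval_apply]
    simp only [map_mul, Polynomial.aeval_C, Polynomial.aeval_X, mul_comm, Pi.smul_def, smul_eq_mul,
      Function.comp_apply]
  refine IsAlgebraic.inv_iff.1 ⟨g, fun hg => ha ?_, ?_⟩
  · rw [← eval_g, hg, Polynomial.eval_zero]
  · rw [aeval_g, hf _ (by rw [smul_dotProduct, smul_eq_mul, inv_mul_cancel₀ hc])]

theorem isAlgebraic_of_forall_aeval_eq_zero [Infinite F] {v : ι → L} {f : MvPolynomial ι F}
    (hf₀ : f ≠ 0) (hf : ∀ q : ι → L, q ⬝ᵥ v = 1 → aeval q f = 0) (i : ι) :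
    IsAlgebraic F (v i) := by
  classical
  obtain ⟨a, ha, hai⟩ := exists_eval_ne_zero_and_eval_add_ne_zero hf₀ (Pi.single i 1)
  have hv : v i = (algebraMap F L ∘ (a + Pi.single i 1)) ⬝ᵥ v - (algebraMap F L ∘ a) ⬝ᵥ v := by
    rw [← sub_dotProduct, ← single_one_dotProduct i v]
    congr 1
    ext j
    rcases eq_or_ne j i with rfl | hj <;> simp [*]
  rw [hv]
  exact (isAlgebraic_dotProduct_of_forall_aeval_eq_zero hf hai).sub
    (isAlgebraic_dotProduct_of_forall_aeval_eq_zero hf ha)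

/-- The parametrization of the hyperplane `q ⬝ᵥ v = 1` by the coordinates other than `i₀`, as a
tuple of affine polynomials. It is meaningful only when `v i₀ ≠ 0`. -/
noncomputable def hyperplaneParam [DecidableEq ι] (v : ι → L) (i₀ i : ι) :
    MvPolynomial {j // j ≠ i₀} L :=
  if h : i = i₀ then C (v i₀)⁻¹ * (1 - ∑ j : {j // j ≠ i₀}, C (v j) * X j) else X ⟨i, h⟩

variable [Algebra L K]

theorem aeval_hyperplaneParam [DecidableEq ι] {v : ι → L} {i₀ : ι} (hv : v i₀ ≠ 0) {q : ι → K}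
    (hq : q ⬝ᵥ (algebraMap L K ∘ v) = 1) (i : ι) :
    aeval (fun j : {j // j ≠ i₀} => q j) (hyperplaneParam v i₀ i) = q i := by
  rcases eq_or_ne i i₀ with rfl | hi
  · have hvK : algebraMap L K (v i) ≠ 0 := by simpa using hv
    have hsum : q i * algebraMap L K (v i) +
        ∑ j : {j // j ≠ i}, q j * algebraMap L K (v j) = 1 :=
      (Fintype.sum_eq_add_sum_subtype_ne _ i).symm.trans hq
    simp only [hyperplaneParam, ↓reduceDIte, map_mul, algHom_C, map_inv₀, map_sub, map_one,
      map_sum, aeval_X]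
    rw [inv_mul_eq_iff_eq_mul₀ hvK, ← hsum]
    simp only [mul_comm, add_sub_cancel_right]
  · simp only [hyperplaneParam, hi, dite_false, aeval_X]

theorem algebraicIndependent_coords_of_card_sub_one_le_cRk {v : ι → L} {i₀ : ι} (hv : v i₀ ≠ 0)
    {p : ι → K} (hp : p ⬝ᵥ (algebraMap L K ∘ v) = 1)
    (hrk : ((Fintype.card ι - 1 : ℕ) : Cardinal) ≤ (matroid L K).cRk (range p)) :
    AlgebraicIndependent L fun i : {i // i ≠ i₀} => p i := by
  classical
  set p' : {i // i ≠ i₀} → K := fun i => p i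
  have hspan : range p ⊆ (matroid L K).closure (range p') := by
    rintro _ ⟨i, rfl⟩
    rw [← aeval_hyperplaneParam hv hp i, matroid_closure_eq]
    have hmem : aeval p' (hyperplaneParam v i₀ i) ∈ Algebra.adjoin L (range p') := by
      rw [Algebra.adjoin_range_eq_range_aeval]
      exact AlgHom.mem_range_self _ _
    exact isAlgebraic_algebraMap (⟨_, hmem⟩ : Algebra.adjoin L (range p'))
  apply algebraicIndependent_of_card_le_cRk
  calc (Fintype.card {i // i ≠ i₀} : Cardinal) = ((Fintype.card ι - 1 : ℕ) : Cardinal) := by simp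
    _ ≤ (matroid L K).cRk (range p) := hrk
    _ ≤ (matroid L K).cRk ((matroid L K).closure (range p')) := Matroid.cRk_le_of_subset _ hspan
    _ = (matroid L K).cRk (range p') := Matroid.cRk_closure _ _

variable [IsScalarTower F L K]

theorem aeval_eq_zero_of_algebraicIndependent_coords {v : ι → L} {i₀ : ι} (hv : v i₀ ≠ 0)
    {p : ι → K} (hp : p ⬝ᵥ (algebraMap L K ∘ v) = 1)
    (hind : AlgebraicIndependent L fun i : {i // i ≠ i₀} => p i)
    {f : MvPolynomial ι F} (hf : aeval p f = 0) {q : ι → L} (hq : q ⬝ᵥ v = 1) :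
    aeval q f = 0 := by
  classical
  have aeval_param {r : ι → K} (hr : r ⬝ᵥ (algebraMap L K ∘ v) = 1) :
      aeval (fun j : {j // j ≠ i₀} => r j) (aeval (hyperplaneParam v i₀) f) = aeval r f := by
    let φ := (aeval (R := L) fun j : {j // j ≠ i₀} => r j).restrictScalars F
    calc φ (aeval (hyperplaneParam v i₀) f)
        = aeval (fun i => φ (hyperplaneParam v i₀ i)) f := comp_aeval_apply _ _ _
      _ = aeval r f := by simp only [φ, AlgHom.restrictScalars_apply, aeval_hyperplaneParam hv hr]
  have hzero : aeval (hyperplaneParam v i₀) f = 0 :=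
    hind ((aeval_param hp).trans (hf.trans (map_zero _).symm))
  have hqK : (algebraMap L K ∘ q) ⬝ᵥ (algebraMap L K ∘ v) = 1 := by
    rw [← RingHom.map_dotProduct, hq, map_one]
  apply (algebraMap L K).injective
  rw [map_zero, ← aeval_algebraMap_apply]
  exact (aeval_param hqK).symm.trans (by rw [hzero, map_zero])

theorem isAlgebraic_of_not_algebraicIndependent_of_coords [Infinite F] {v : ι → L} {i₀ : ι}
    (hv : v i₀ ≠ 0) {p : ι → K} (hp : p ⬝ᵥ (algebraMap L K ∘ v) = 1)
    (hind : AlgebraicIndependent L fun i : {i // i ≠ i₀} => p i)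
    (hdep : ¬ AlgebraicIndependent F p) (i : ι) : IsAlgebraic F (v i) := by
  obtain ⟨f, hf, hf₀⟩ : ∃ f : MvPolynomial ι F, aeval p f = 0 ∧ f ≠ 0 := by
    simpa only [algebraicIndependent_iff, not_forall, exists_prop] using hdep
  exact isAlgebraic_of_forall_aeval_eq_zero hf₀
    (fun _ => aeval_eq_zero_of_algebraicIndependent_coords hv hp hind hf) i

end FieldExtension

section Subfield

variable {K : Type*} [Field K] {F E : Subfield K} {s : Set K}

theorem isAlgebraic_of_mem {x : K} (hx : x ∈ F) : IsAlgebraic F x :=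
  isAlgebraic_algebraMap (⟨x, hx⟩ : F)

theorem isAlgebraic_of_le (h : F ≤ E) {x : K} (hx : IsAlgebraic F x) : IsAlgebraic E x := by
  let _ : Algebra F E := (Subfield.inclusion h).toAlgebra
  have : IsScalarTower F E K := .of_algebraMap_eq fun _ => rfl
  exact hx.tower_top E

theorem algebraicIndependent_of_le (h : F ≤ E) {ι : Type*} {x : ι → K}
    (hx : AlgebraicIndependent E x) : AlgebraicIndependent F x := by
  let _ : Algebra F E := (Subfield.inclusion h).toAlgebra
  have : IsScalarTower F E K := .of_algebraMap_eq fun _ => rfl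
  exact hx.restrictScalars (algebraMap F E).injective

theorem le_extend (F : Subfield K) (s : Set K) : F ≤ F.extend s :=
  subset_union_left.trans Subfield.subset_closure

theorem subset_extend (F : Subfield K) (s : Set K) : s ⊆ F.extend s :=
  subset_union_right.trans Subfield.subset_closure

theorem extend_le (h : F ≤ E) (hs : s ⊆ E) : F.extend s ≤ E :=
  Subfield.closure_le.2 (union_subset h hs)

theorem extend_eq_adjoin (F : Subfield K) (s : Set K) :
    F.extend s = (IntermediateField.adjoin F s).toSubfield := by
  rw [IntermediateField.adjoin_toSubfield, Subfield.extend]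
  congr 2
  exact Subtype.range_coe.symm

theorem isAlgebraic_extend_iff {x : K} :
    IsAlgebraic (F.extend s) x ↔ IsAlgebraic (Algebra.adjoin F s) x := by
  rw [extend_eq_adjoin, ← IntermediateField.isAlgebraic_adjoin_iff (E := K)]
  exact Iff.rfl

theorem algebraicIndependent_extend_iff {ι : Type*} {x : ι → K} :
    AlgebraicIndependent (F.extend s) x ↔ AlgebraicIndependent (Algebra.adjoin F s) x := by
  rw [extend_eq_adjoin, ← IntermediateField.algebraicIndependent_adjoin_iff (E := K)]
  exact Iff.rfl

theorem mem_matroid_closure_iff {x : K} :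
    x ∈ (matroid F K).closure s ↔ IsAlgebraic (F.extend s) x := by
  rw [isAlgebraic_extend_iff, matroid_closure_eq]
  exact Iff.rfl

theorem trdeg_eq_cRk (F E : Subfield K) : F.trdeg E = (matroid F K).cRk E := by
  apply le_antisymm
  · exact ciSup_le' fun t => (matroid_indep_iff.2 t.2.2).cardinalMk_le_cRk_of_subset t.2.1
  · refine Matroid.cRk_le_iff.2 fun I hI => ?_
    exact le_ciSup (f := fun t : {t : Set K // t ⊆ (E : Set K) ∧
      AlgebraicIndependent F ((↑) : t → K)} => #t.1)
      bddAbove_of_small ⟨I, hI.subset, matroid_indep_iff.1 hI.indep⟩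

theorem trdeg_extend_eq_cRk (F : Subfield K) (s : Set K) :
    F.trdeg (F.extend s) = (matroid F K).cRk s := by
  rw [trdeg_eq_cRk]
  refine le_antisymm ?_ (Matroid.cRk_le_of_subset _ (subset_extend F s))
  rw [← Matroid.cRk_closure _ s]
  exact Matroid.cRk_le_of_subset _ fun x hx => mem_matroid_closure_iff.2 (isAlgebraic_of_mem hx)

theorem trdeg_extend_eq_of_isBasis (hFE : F ≤ E) {B : Set K} (hB : (matroid F K).IsBasis B s)
    (hBE : (matroid E K).Indep B) : E.trdeg (E.extend s) = F.trdeg (F.extend s) := by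
  have hBE_closure : s ⊆ (matroid E K).closure B := fun x hx =>
    mem_matroid_closure_iff.2 <|
      isAlgebraic_of_le (extend_le (hFE.trans (le_extend E B)) (subset_extend E B))
        (mem_matroid_closure_iff.1 (hB.subset_closure hx))
  have hBE_basis := hBE.isBasis_of_subset_of_subset_closure hB.subset hBE_closure
  rw [trdeg_extend_eq_cRk, trdeg_extend_eq_cRk, ← hB.cardinalMk_eq_cRk,
    ← hBE_basis.cardinalMk_eq_cRk]

theorem trdeg_extend_eq_of_isAlgebraic (hFE : F ≤ E) (hs : ∀ x ∈ s, IsAlgebraic F x) :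
    E.trdeg (E.extend s) = F.trdeg (F.extend s) :=
  trdeg_extend_eq_of_isBasis hFE
    (Matroid.empty_isBasis_iff.2 fun x hx =>
      mem_matroid_closure_iff.2 (isAlgebraic_of_le (le_extend F ∅) (hs x hx)))
    (Matroid.empty_indep _)

theorem trdeg_extend_eq_of_algebraicIndependent {ι : Type*} {p : ι → K}
    (hp : AlgebraicIndependent (F.extend s) p) :
    (F.extend (range p)).trdeg ((F.extend (range p)).extend s) = F.trdeg (F.extend s) := by
  obtain ⟨B, hB⟩ := (matroid F K).exists_isBasis s
  refine trdeg_extend_eq_of_isBasis (le_extend F _) hB (matroid_indep_iff.2 ?_)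
  have hpB : AlgebraicIndependent (F.extend B) p :=
    algebraicIndependent_of_le
      (extend_le (le_extend F s) (hB.subset.trans (subset_extend F s))) hp
  have hBF : AlgebraicIndependent F ((↑) : B → K) := matroid_indep_iff.1 hB.indep
  have hBp : AlgebraicIndependent (Algebra.adjoin F (range ((↑) : B → K))) p := by
    rwa [Subtype.range_coe, ← algebraicIndependent_extend_iff]
  exact algebraicIndependent_extend_iff.2 (algebraicIndependent_adjoin_range_symm hBF hBp)

theorem isAlgebraic_of_mem_of_finite_extend [Finite (F.extend s)] {x : K} (hx : x ∈ s) :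
    IsAlgebraic F x := by
  let _ : Algebra F (F.extend s) := (Subfield.inclusion (le_extend F s)).toAlgebra
  have : IsScalarTower F (F.extend s) K := .of_algebraMap_eq fun _ => rfl
  exact (Algebra.IsAlgebraic.isAlgebraic (⟨x, subset_extend F s hx⟩ : F.extend s)).algebraMap

theorem isAlgebraic_of_not_algebraicIndependent {ι : Type*} [Fintype ι]
    [Infinite F] {v p : ι → K} {i₀ : ι} (hv : v i₀ ≠ 0) (hp : p ⬝ᵥ v = 1) (hvE : ∀ i, v i ∈ E)
    (hrk : ((Fintype.card ι - 1 : ℕ) : Cardinal) ≤ (matroid E K).cRk (range p))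
    (hFE : ∀ x ∈ F, IsAlgebraic E x) (hdep : ¬ AlgebraicIndependent F p) (i : ι) :
    IsAlgebraic F (v i) := by
  let v' : ι → E := fun i => ⟨v i, hvE i⟩
  have hv' : v' i₀ ≠ 0 := fun h => hv (congrArg Subtype.val h)
  have hind := (algebraicIndependent_coords_of_card_sub_one_le_cRk hv' hp hrk).algebraicClosure
  let L := algebraicClosure E K
  let _ : Algebra F L := (Subfield.inclusion (K := K) (S := F) (T := L.toSubfield) fun x hx =>
    mem_algebraicClosure_iff.2 (hFE x hx)).toAlgebra
  have : IsScalarTower F L K := .of_algebraMap_eq fun _ => rfl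
  have hvL : algebraMap E L (v' i₀) ≠ 0 := by simpa using hv'
  exact (isAlgebraic_of_not_algebraicIndependent_of_coords (v := algebraMap E L ∘ v')
    hvL hp hind hdep i).algebraMap

end Subfield

end GenericHyperplane

open GenericHyperplane in
open scoped Matrix in
theorem generic_hyperplane_lemma_general {K ι : Type*} [Field K] [Fintype ι] (A : Subfield K)
    (v p : ι → K) (hmem : p ⬝ᵥ v = 1)
    (hgen : (A.extend (Set.range v)).trdeg ((A.extend (Set.range v)).extend (Set.range p)) =
      ((Fintype.card ι - 1 : ℕ) : Cardinal))
    (W : Set K) (hW : ∀ x ∈ W, IsAlgebraic (A.extend (Set.range v)) x) :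
    (∀ i, IsAlgebraic (A.extend W) (v i)) ∨
      (A.extend (Set.range p)).trdeg ((A.extend (Set.range p)).extend W) =
        A.trdeg (A.extend W) := by
  rcases finite_or_infinite (A.extend W) with hfin | hinf
  · exact .inr (trdeg_extend_eq_of_isAlgebraic (le_extend A _) fun _ =>
      isAlgebraic_of_mem_of_finite_extend)
  by_cases hind : AlgebraicIndependent (A.extend W) p
  · exact .inr (trdeg_extend_eq_of_algebraicIndependent hind)
  obtain ⟨i₀, hv⟩ : ∃ i, v i ≠ 0 := by
    by_contra! hv
    simp [funext hv] at hmem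
  have hW_le : A.extend W ≤ (algebraicClosure (A.extend (Set.range v)) K).toSubfield :=
    extend_le
      (fun x hx => mem_algebraicClosure_iff.2 (isAlgebraic_of_mem (le_extend A _ hx)))
      (fun x hx => mem_algebraicClosure_iff.2 (hW x hx))
  exact .inl <| isAlgebraic_of_not_algebraicIndependent hv hmem
    (fun i => subset_extend A _ (Set.mem_range_self i)) (by rw [← trdeg_extend_eq_cRk, hgen])
    (fun x hx => mem_algebraicClosure_iff.1 (hW_le hx)) hind

/-- The generic hyperplane lemma: if `p̄` is a generic point over `A(v̄)` of the
hyperplane `Π_{v̄} = {x̄ : Σ xᵢ·vᵢ = 1}`, then for any tuple `w̄` algebraic over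
`A(v̄)`, either `v̄` is algebraic over `A(w̄)`, or `w̄` has the same transcendence
degree over `A(p̄)` as over `A`. -/
theorem generic_hyperplane_lemma {K : Type*} [Field K] [CharZero K] [IsAlgClosed K]
    (A : Subfield K) (N : ℕ) (hN : 1 ≤ N) (v p : Fin N → K)
    (hmem : ∑ i, p i * v i = 1)
    (hgen : Subfield.trdegTuple (A.extend (Set.range v)) p = ((N - 1 : ℕ) : Cardinal)) :
    ∀ (m : ℕ) (w : Fin m → K),
      (∀ j, IsAlgebraic (A.extend (Set.range v)) (w j)) →
      (∀ i, IsAlgebraic (A.extend (Set.range w)) (v i)) ∨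
        Subfield.trdegTuple (A.extend (Set.range p)) w = Subfield.trdegTuple A w := by
  intro m w hw
  exact generic_hyperplane_lemma_general A v p hmem (by rwa [Fintype.card_fin]) (Set.range w)
    (Set.forall_mem_range.2 hw)
end

section
/- Let K be a differential field with derivation D and field of constants C, and let A, B ⊆ K be algebraically closed subfields containing C, each of finite transcendence degree over C. Let A∨B denote the relative algebraic closure in K of the subfield generated by A ∪ B, and assume σ(A∨B) < ∞. For an intermediate field C ⊆ F ⊆ K with trdeg_C(F) < ∞ and σ(F) < ∞, set δ(F) = trdeg_C(F) − σ(F) ∈ ℤ (note that σ(A), σ(B), σ(A∩B) ≤ σ(A∨B) < ∞, so all the relevant values of δ are defined). Then δ(A∨B) + δ(A ∩ B) ≤ δ(A) + δ(B), i.e. the predimension δ given by the Ax–Schanuel inequality for the exponential differential equation is submodular. -/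
open scoped ENat

/-- For an intermediate field `C ⊆ A ⊆ K` of a differential field `K` with constants `C`,
`σ(A) ∈ ℕ∞` is the supremum of the natural numbers `n` for which there are solutions
`(a₁, b₁), …, (aₙ, bₙ) ∈ A` of the exponential differential equation `D y = y·D x`
with `b i ≠ 0` and `a₁, …, aₙ` linearly independent over `ℚ` modulo `C` (i.e. their
images in the quotient `ℚ`-vector space `K/C` are linearly independent over `ℚ`). -/
noncomputable def sigmaExp {K : Type*} [Field K] [CharZero K] (D : Derivation ℚ K K)
    (A : Subfield K) : ℕ∞ :=
  sSup {N : ℕ∞ | ∃ n : ℕ, N = n ∧ ∃ a b : Fin n → K,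
    (∀ i, a i ∈ A) ∧ (∀ i, b i ∈ A) ∧ (∀ i, b i ≠ 0) ∧
    (∀ i, D (b i) = b i * D (a i)) ∧
    LinearIndependent ℚ
      (fun i => (Submodule.Quotient.mk (a i) : K ⧸ LinearMap.ker D.toLinearMap))}

/-!
The transcendence degree over `C` is the rank function of the algebraic independence matroid, which
is submodular. On the other side, products of solutions of `D y = y * D x` are again solutions, so
the classes `a + C` of the first coordinates of the solutions in a subfield `A` form a subgroup
`Γ A` of `K / C`, and `σ(A)` is the dimension of its `ℚ`-span. A solution is determined by the class
of its first coordinate up to constants, so `Γ (A ∩ B) = Γ A ∩ Γ B` because `C ⊆ B`. Taking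
`ℚ`-spans of subgroups preserves intersections, since it is a localization. With the dimension
formula for sums of subspaces this makes `σ` supermodular.
-/

open Cardinal (toENat)

section TranscendenceDegree

open AlgebraicIndependent

variable {K : Type*} [Field K]

theorem subfield_trdeg_eq_cRk (F E : Subfield K) :
    Subfield.trdeg F E = (matroid F K).cRk (E : Set K) := by
  refine le_antisymm (ciSup_le' fun t ↦ ?_) (Matroid.cRk_le_iff.2 fun I hI ↦ ?_)
  · exact (matroid_indep_iff.2 t.2.2).cardinalMk_le_cRk_of_subset t.2.1
  · exact le_ciSup_of_le Cardinal.bddAbove_of_small ⟨I, hI.subset, hI.indep⟩ le_rfl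

open scoped IntermediateField.algebraAdjoinAdjoin in
theorem isAlgebraic_adjoin_of_subfield_closure (F : Type*) [Field F] [Algebra F K] {s : Set K}
    {x : K} (hx : IsAlgebraic (Subfield.closure s) x) : IsAlgebraic (Algebra.adjoin F s) x := by
  have hle : Subfield.closure s ≤ (IntermediateField.adjoin F s).toSubfield :=
    Subfield.closure_le.2 (IntermediateField.subset_adjoin F s)
  let : Algebra (Subfield.closure s) (IntermediateField.adjoin F s) :=
    (Subfield.inclusion hle).toAlgebra
  have : IsScalarTower (Subfield.closure s) (IntermediateField.adjoin F s) K :=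
    .of_algebraMap_eq fun _ ↦ rfl
  rw [IsFractionRing.isAlgebraic_iff (Algebra.adjoin F s) (IntermediateField.adjoin F s) K]
  exact hx.tower_top _

theorem toENat_trdeg_add_trdeg_inf_le (F : Subfield K) {A B E : Subfield K}
    (hE : ∀ x ∈ E, IsAlgebraic (Subfield.closure ((A : Set K) ∪ B)) x) :
    toENat (Subfield.trdeg F E) + toENat (Subfield.trdeg F (A ⊓ B)) ≤
      toENat (Subfield.trdeg F A) + toENat (Subfield.trdeg F B) := by
  simp only [subfield_trdeg_eq_cRk, Matroid.toENat_cRk_eq, Subfield.coe_inf]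
  have hE_closure : (E : Set K) ⊆ (matroid F K).closure ((A : Set K) ∪ B) := by
    rw [matroid_closure_eq]
    exact fun x hx ↦ isAlgebraic_adjoin_of_subfield_closure F (hE x hx)
  calc (matroid F K).eRk E + (matroid F K).eRk (A ∩ B)
      ≤ (matroid F K).eRk (A ∪ B) + (matroid F K).eRk (A ∩ B) := by
        rw [← (matroid F K).eRk_closure_eq (A ∪ B)]
        gcongr
        exact (matroid F K).eRk_mono hE_closure
    _ ≤ (matroid F K).eRk A + (matroid F K).eRk B := by
        rw [add_comm]
        exact (matroid F K).eRk_inter_add_eRk_union_le A B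

end TranscendenceDegree

section Span

theorem span_inf_of_isLocalization {R : Type*} (S : Type*) {M : Type*} [CommRing R] [CommRing S]
    [Algebra R S] [AddCommGroup M] [Module R M] [Module S M] [IsScalarTower R S M]
    (p : Submonoid R) [IsLocalization p S] (N P : Submodule R M) :
    Submodule.span S ((N ⊓ P : Submodule R M) : Set M) =
      Submodule.span S (N : Set M) ⊓ Submodule.span S (P : Set M) := by
  have : IsLocalizedModule p (.id : M →ₗ[R] M) := isLocalizedModule_id p M S
  simpa [Submodule.localized'_eq_span] using Submodule.localized'_inf S p .id N P

theorem natCast_le_rank_span_iff {k V : Type*} [DivisionRing k] [AddCommGroup V] [Module k V]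
    {s : Set V} {n : ℕ} :
    (n : Cardinal) ≤ Module.rank k (Submodule.span k s) ↔
      ∃ v : Fin n → V, (∀ i, v i ∈ s) ∧ LinearIndependent k v := by
  constructor
  · intro hn
    obtain ⟨b, hbs, hspan, hb⟩ := exists_linearIndependent k s
    rw [← hspan, rank_span_set hb] at hn
    obtain ⟨f⟩ : Nonempty (Fin n ↪ b) := Cardinal.lift_mk_le'.1 (by simpa using hn)
    exact ⟨fun i ↦ f i, fun i ↦ hbs (f i).2, hb.comp f f.injective⟩
  · rintro ⟨v, hvs, hv⟩
    exact Module.le_rank_iff.2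
      ⟨fun i ↦ ⟨v i, Submodule.subset_span (hvs i)⟩, .of_comp (Submodule.subtype _) hv⟩

end Span

section ExponentialClasses

theorem derivation_div_eq_zero {R K : Type*} [CommRing R] [Field K] [Algebra R K]
    {D : Derivation R K K} {b b' x : K} (hb : D b = b * x) (hb' : D b' = b' * x) :
    D (b / b') = 0 := by
  rw [D.leibniz_div, hb, hb', smul_eq_mul, smul_eq_mul, smul_eq_mul]
  ring

variable {K : Type*} [Field K] [CharZero K] {D : Derivation ℚ K K} {A B E : Subfield K}

/-- The group of classes modulo constants of those `a ∈ A` that have an exponential in `A`, that is,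
some nonzero `b ∈ A` with `D b = b * D a`. Classes are used instead of the elements `a` themselves
because linear independence in `sigmaExp` is modulo constants. -/
def expClasses (D : Derivation ℚ K K) (A : Subfield K) :
    AddSubgroup (K ⧸ LinearMap.ker D.toLinearMap) where
  carrier := {w | ∃ a ∈ A, ∃ b ∈ A, b ≠ 0 ∧ D b = b * D a ∧ Submodule.Quotient.mk a = w}
  zero_mem' := ⟨0, A.zero_mem, 1, A.one_mem, one_ne_zero, by simp, rfl⟩
  add_mem' := by
    rintro _ _ ⟨a, ha, b, hb, hb0, h, rfl⟩ ⟨a', ha', b', hb', hb0', h', rfl⟩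
    refine ⟨a + a', A.add_mem ha ha', b * b', A.mul_mem hb hb', mul_ne_zero hb0 hb0', ?_, rfl⟩
    rw [D.leibniz, h, h', map_add, smul_eq_mul, smul_eq_mul]
    ring
  neg_mem' := by
    rintro _ ⟨a, ha, b, hb, hb0, h, rfl⟩
    refine ⟨-a, A.neg_mem ha, b⁻¹, A.inv_mem hb, inv_ne_zero hb0, ?_, rfl⟩
    rw [D.leibniz_inv, h, map_neg, smul_eq_mul]
    field_simp

theorem mem_expClasses {w : K ⧸ LinearMap.ker D.toLinearMap} :
    w ∈ expClasses D A ↔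
      ∃ a ∈ A, ∃ b ∈ A, b ≠ 0 ∧ D b = b * D a ∧ Submodule.Quotient.mk a = w :=
  Iff.rfl

theorem expClasses_mono (h : A ≤ B) : expClasses D A ≤ expClasses D B := by
  rintro _ ⟨a, ha, b, hb, hab⟩
  exact ⟨a, h ha, b, h hb, hab⟩

theorem expClasses_inf (hB : ∀ c, D c = 0 → c ∈ B) :
    expClasses D (A ⊓ B) = expClasses D A ⊓ expClasses D B := by
  refine le_antisymm (le_inf (expClasses_mono inf_le_left) (expClasses_mono inf_le_right)) ?_
  rintro _ ⟨⟨a, ha, b, hb, hb0, h, rfl⟩, a', ha', b', hb', hb0', h', haa'⟩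
  have hD_sub : D (a - a') = 0 := (Submodule.Quotient.eq _).1 haa'.symm
  have hDa : D a' = D a := by rw [map_sub, sub_eq_zero] at hD_sub; exact hD_sub.symm
  have haB : a ∈ B := by simpa using B.add_mem (hB _ hD_sub) ha'
  have hbB : b ∈ B := by
    have hdiv : b / b' ∈ B := hB _ (derivation_div_eq_zero h (hDa ▸ h'))
    simpa [hb0'] using B.mul_mem hdiv hb'
  exact ⟨a, ⟨ha, haB⟩, b, ⟨hb, hbB⟩, hb0, h, rfl⟩

/-- The `ℚ`-subspace of `K / C` spanned by the exponential classes of `A`. Its dimension is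
`sigmaExp D A`. -/
def expSpan (D : Derivation ℚ K K) (A : Subfield K) :
    Submodule ℚ (K ⧸ LinearMap.ker D.toLinearMap) :=
  Submodule.span ℚ (expClasses D A)

theorem expSpan_mono (h : A ≤ B) : expSpan D A ≤ expSpan D B :=
  Submodule.span_mono (expClasses_mono h)

theorem expSpan_inf (hB : ∀ c, D c = 0 → c ∈ B) :
    expSpan D (A ⊓ B) = expSpan D A ⊓ expSpan D B := by
  have := span_inf_of_isLocalization ℚ (nonZeroDivisors ℤ)
    (expClasses D A).toIntSubmodule (expClasses D B).toIntSubmodule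
  simpa [expSpan, expClasses_inf hB] using this

theorem sigmaExp_eq_toENat_rank (D : Derivation ℚ K K) (A : Subfield K) :
    sigmaExp D A = toENat (Module.rank ℚ (expSpan D A)) := by
  apply le_antisymm
  · refine sSup_le ?_
    rintro _ ⟨n, rfl, a, b, ha, hb, hb0, hD, hli⟩
    rw [Cardinal.natCast_le_toENat, expSpan, natCast_le_rank_span_iff]
    exact ⟨_, fun i ↦ ⟨a i, ha i, b i, hb i, hb0 i, hD i, rfl⟩, hli⟩
  · refine ENat.forall_natCast_le_iff_le.1 fun n hn ↦ le_sSup ?_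
    rw [Cardinal.natCast_le_toENat, expSpan, natCast_le_rank_span_iff] at hn
    obtain ⟨v, hv, hli⟩ := hn
    choose a ha b hb hb0 hD hmk using fun i ↦ mem_expClasses.1 (hv i)
    exact ⟨n, rfl, a, b, ha, hb, hb0, hD, by rwa [funext hmk]⟩

theorem sigmaExp_add_sigmaExp_le (hAE : A ≤ E) (hBE : B ≤ E) (hB : ∀ c, D c = 0 → c ∈ B) :
    sigmaExp D A + sigmaExp D B ≤ sigmaExp D E + sigmaExp D (A ⊓ B) := by
  simp only [sigmaExp_eq_toENat_rank, ← map_add]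
  apply OrderHomClass.mono toENat
  calc Module.rank ℚ (expSpan D A) + Module.rank ℚ (expSpan D B)
      = Module.rank ℚ ↥(expSpan D A ⊔ expSpan D B) +
          Module.rank ℚ ↥(expSpan D A ⊓ expSpan D B) :=
        (Submodule.rank_sup_add_rank_inf_eq _ _).symm
    _ ≤ Module.rank ℚ (expSpan D E) + Module.rank ℚ (expSpan D (A ⊓ B)) := by
        rw [expSpan_inf hB]
        gcongr
        exact Submodule.rank_mono (sup_le (expSpan_mono hAE) (expSpan_mono hBE))

end ExponentialClasses

-- Written without subtraction, so that the values may be infinite.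
theorem predimension_submodular_general {K : Type*} [Field K] [CharZero K] (D : Derivation ℚ K K)
    (C : Subfield K) (hC : (C : Set K) = {a : K | D a = 0})
    (A B : Subfield K) (hCB : C ≤ B) (AB : Subfield K)
    (hAB : (AB : Set K) =
      {x : K | IsAlgebraic (Subfield.closure ((A : Set K) ∪ (B : Set K))) x}) :
    toENat (Subfield.trdeg C AB) + toENat (Subfield.trdeg C (A ⊓ B)) +
        (sigmaExp D A + sigmaExp D B) ≤
      toENat (Subfield.trdeg C A) + toENat (Subfield.trdeg C B) +
        (sigmaExp D AB + sigmaExp D (A ⊓ B)) := by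
  have mem_AB {x : K} : x ∈ AB ↔ IsAlgebraic (Subfield.closure ((A : Set K) ∪ B)) x :=
    Set.ext_iff.1 hAB x
  have hle : Subfield.closure ((A : Set K) ∪ B) ≤ AB :=
    fun x hx ↦ mem_AB.2 (isAlgebraic_algebraMap (⟨x, hx⟩ : Subfield.closure ((A : Set K) ∪ B)))
  obtain ⟨hA, hB⟩ := Set.union_subset_iff.1 (Subfield.closure_le.1 hle)
  have hconst : ∀ c, D c = 0 → c ∈ B := fun c hc ↦ hCB ((Set.ext_iff.1 hC c).2 hc)
  exact add_le_add (toENat_trdeg_add_trdeg_inf_le C fun _ ↦ mem_AB.1)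
    (sigmaExp_add_sigmaExp_le hA hB hconst)

/-- Submodularity of the Ax–Schanuel predimension `δ(F) = td_C(F) − σ(F)` for the
exponential differential equation: `δ(A∨B) + δ(A ∩ B) ≤ δ(A) + δ(B)`, where `A`, `B`
are algebraically closed subfields of `K` containing the constants `C`, of finite
transcendence degree over `C`, and `A∨B` is the relative algebraic closure in `K` of
the subfield generated by `A ∪ B` (assumed to have finite `σ`). -/
theorem predimension_submodular {K : Type*} [Field K] [CharZero K] (D : Derivation ℚ K K)
    (C : Subfield K) (hC : (C : Set K) = {a : K | D a = 0})
    (A B : Subfield K) (hCA : C ≤ A) (hCB : C ≤ B)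
    (hAac : IsAlgClosed A) (hBac : IsAlgClosed B)
    (AB : Subfield K)
    (hAB : (AB : Set K) =
      {x : K | IsAlgebraic (Subfield.closure ((A : Set K) ∪ (B : Set K))) x})
    (tA tB tAB tI : ℕ)
    (htA : Subfield.trdeg C A = (tA : Cardinal))
    (htB : Subfield.trdeg C B = (tB : Cardinal))
    (htAB : Subfield.trdeg C AB = (tAB : Cardinal))
    (htI : Subfield.trdeg C (A ⊓ B) = (tI : Cardinal))
    (sA sB sAB sI : ℕ)
    (hsA : sigmaExp D A = (sA : ℕ∞)) (hsB : sigmaExp D B = (sB : ℕ∞))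
    (hsAB : sigmaExp D AB = (sAB : ℕ∞)) (hsI : sigmaExp D (A ⊓ B) = (sI : ℕ∞)) :
    ((tAB : ℤ) - (sAB : ℤ)) + ((tI : ℤ) - (sI : ℤ)) ≤
      ((tA : ℤ) - (sA : ℤ)) + ((tB : ℤ) - (sB : ℤ)) := by
  have h := predimension_submodular_general D C hC A B hCB AB hAB
  simp only [htA, htB, htAB, htI, hsA, hsB, hsAB, hsI, map_natCast] at h
  norm_cast at h
  omega
end
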